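/- arXiv:2312.06061 — 2 statements merged into one kernel-verified Lean document; each statement's English description precedes it below -/
import Mathlib

section
/- Let Q be a semi-universally flexible loop. Then for all x, y ∈ Q and all integers m, n, xᵐ·(y·xⁿ) = (xᵐ·y)·xⁿ, where integer powers are defined left-associatedly by x⁰ = 1, x^(n+1) = x·xⁿ, and x^(n−1) = x\xⁿ. -/
/-- A loop `(Q, ·, \, /, 1)`: `mul x y = x·y`, `ld x y = x\y`, `rd x y = x/y`. -/
structure LoopStr (Q : Type*) where
  mul : Q → Q → Q
  ld : Q → Q → Q
  rd : Q → Q → Q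
  one : Q
  ld_mul : ∀ x y, ld x (mul x y) = y
  rd_mul : ∀ x y, rd (mul y x) x = y
  mul_ld : ∀ x y, mul x (ld x y) = y
  mul_rd : ∀ x y, mul (rd y x) x = y
  one_mul : ∀ x, mul one x = x
  mul_one : ∀ x, mul x one = x

/-!
Write `Lₐ` and `R_b` for the left and right translations, as permutations of the loop. The claim is
that `L` at `xᵐ` commutes with `R` at `xⁿ`. Left semi-universal flexibility says precisely that
`R_u⁻¹ Lₐ R_u` is unchanged when `u` is replaced by `a·u`, and right semi-universal flexibility that
`L_v⁻¹ R_b L_v` is unchanged when `v` is replaced by `v·b`. The first invariance makes `L_x` commute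
with every `R` at a power of `x`, whence `xᵐ·xⁿ = xᵐ⁺ⁿ`. Both invariances together then show that
the truth of the claim for `(m, n)` is unchanged by `n ↦ n + m` and by `m ↦ m + n`, so the Euclidean
algorithm reduces it to an exponent `0`.
-/

/-- A binary operation is flexible if `x ∘ (y ∘ x) = (x ∘ y) ∘ x`. -/
def IsFlexible {Q : Type*} (op : Q → Q → Q) : Prop :=
  ∀ x y, op x (op y x) = op (op x y) x

theorem forall_int_of_add_iff {r : ℤ → ℤ → Prop} (zero_left : ∀ n, r 0 n)
    (add_left : ∀ m n, r (m + n) n ↔ r m n) (add_right : ∀ m n, r m (n + m) ↔ r m n) (m n : ℤ) :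
    r m n := by
  have zero_right (m : ℤ) : r m 0 := by
    have diagonal : r m m := by simpa only [zero_add] using (add_left 0 m).2 (zero_left m)
    exact (add_right m 0).1 (by rwa [zero_add])
  have mod_left (m n : ℤ) : r (m % n) n ↔ r m n := by
    have periodic : Function.Periodic (r · n) n := fun m => propext (add_left m n)
    simpa only [Int.cast_id, Int.emod_add_ediv_mul] using
      (periodic.int_mul (m / n) (m % n)).symm.to_iff
  have mod_right (m n : ℤ) : r m (n % m) ↔ r m n := by
    have periodic : Function.Periodic (r m) m := fun n => propext (add_right m n)
    simpa only [Int.cast_id, Int.emod_add_ediv_mul] using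
      (periodic.int_mul (n / m) (n % m)).symm.to_iff
  -- The Euclidean algorithm swaps its arguments at each step, so the induction is on the
  -- symmetrized relation.
  suffices r m n ∧ r n m from this.1
  induction m, n using EuclideanDomain.GCD.induction with
  | H0 n => exact ⟨zero_left n, zero_right n⟩
  | H1 m n _ ih => exact ⟨(mod_right m n).1 ih.2, (mod_left n m).1 ih.1⟩

namespace LoopStr

variable {Q : Type*} (L : LoopStr Q)

/-- The left translation `y ↦ a·y`, as a permutation. -/
@[simps]
def leftMul (a : Q) : Equiv.Perm Q where
  toFun := L.mul a
  invFun := L.ld a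
  left_inv := L.ld_mul a
  right_inv := L.mul_ld a

/-- The right translation `y ↦ y·b`, as a permutation. -/
@[simps]
def rightMul (b : Q) : Equiv.Perm Q where
  toFun y := L.mul y b
  invFun y := L.rd y b
  left_inv := L.rd_mul b
  right_inv := L.mul_rd b

/-- Every left principal isotope `x ∘ y = (x/u)·y` is flexible. -/
def IsLeftSUF : Prop :=
  ∀ u, IsFlexible fun x y => L.mul (L.rd x u) y

/-- Every right principal isotope `x ∘ y = x·(v\y)` is flexible. -/
def IsRightSUF : Prop :=
  ∀ v, IsFlexible fun x y => L.mul x (L.ld v y)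

/-- The left-associated integer power: the `n`-th iterate of left translation by `x`, applied
to `1`. -/
def zpow (x : Q) (n : ℤ) : Q :=
  (L.leftMul x ^ n) L.one

protected theorem zpow_zero (x : Q) : L.zpow x 0 = L.one := rfl

theorem leftMul_zpow_apply_zpow (x : Q) (m n : ℤ) :
    (L.leftMul x ^ m) (L.zpow x n) = L.zpow x (m + n) := by
  rw [zpow, zpow, zpow_add, Equiv.Perm.mul_apply]

theorem mul_self_zpow (x : Q) (n : ℤ) : L.mul x (L.zpow x n) = L.zpow x (n + 1) := by
  rw [add_comm, ← leftMul_zpow_apply_zpow, zpow_one, leftMul_apply]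

theorem eq_zpow {x : Q} {p : ℤ → Q} (zero : p 0 = L.one)
    (succ : ∀ n, p (n + 1) = L.mul x (p n)) (n : ℤ) : p n = L.zpow x n := by
  induction n using Int.induction_on with
  | zero => rw [zero, L.zpow_zero]
  | succ n ih => rw [succ, ih, mul_self_zpow]
  | pred n ih =>
    apply (L.leftMul x).injective
    rw [leftMul_apply, leftMul_apply, ← succ, mul_self_zpow, sub_add_cancel, ih]

theorem leftMul_one : L.leftMul L.one = 1 :=
  Equiv.ext L.one_mul

theorem rightMul_one : L.rightMul L.one = 1 :=
  Equiv.ext L.mul_one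

variable {L}

theorem IsLeftSUF.inv_rightMul_mul_leftMul_mul_rightMul (h : L.IsLeftSUF) (a u : Q) :
    (L.rightMul (L.mul a u))⁻¹ * L.leftMul a * L.rightMul (L.mul a u) =
      (L.rightMul u)⁻¹ * L.leftMul a * L.rightMul u := by
  ext y
  have flexible := h u (L.mul a u) (L.mul y u)
  simp only [L.rd_mul] at flexible
  simp only [Equiv.Perm.mul_apply, Equiv.Perm.inv_def, leftMul_apply, rightMul_apply,
    rightMul_symm_apply]
  rw [flexible, L.rd_mul]

theorem IsRightSUF.inv_leftMul_mul_rightMul_mul_leftMul (h : L.IsRightSUF) (v b : Q) :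
    (L.leftMul (L.mul v b))⁻¹ * L.rightMul b * L.leftMul (L.mul v b) =
      (L.leftMul v)⁻¹ * L.rightMul b * L.leftMul v := by
  ext y
  have flexible := h v (L.mul v b) (L.mul v y)
  simp only [L.ld_mul] at flexible
  simp only [Equiv.Perm.mul_apply, Equiv.Perm.inv_def, leftMul_apply, rightMul_apply,
    leftMul_symm_apply]
  rw [← flexible, L.ld_mul]

theorem IsLeftSUF.commute_rightMul_mul_iff (h : L.IsLeftSUF) (a u : Q) :
    Commute (L.leftMul a) (L.rightMul (L.mul a u)) ↔ Commute (L.leftMul a) (L.rightMul u) := by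
  simp only [commute_iff_eq, ← inv_mul_eq_iff_eq_mul, ← mul_assoc,
    h.inv_rightMul_mul_leftMul_mul_rightMul]

theorem IsRightSUF.commute_leftMul_mul_iff (h : L.IsRightSUF) (v b : Q) :
    Commute (L.leftMul (L.mul v b)) (L.rightMul b) ↔ Commute (L.leftMul v) (L.rightMul b) := by
  simp only [commute_iff_eq, eq_comm (a := L.leftMul _ * _), ← inv_mul_eq_iff_eq_mul, ← mul_assoc,
    h.inv_leftMul_mul_rightMul_mul_leftMul]

theorem IsLeftSUF.commute_leftMul_rightMul_zpow (h : L.IsLeftSUF) (x : Q) (n : ℤ) :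
    Commute (L.leftMul x) (L.rightMul (L.zpow x n)) := by
  induction n using Int.induction_on with
  | zero =>
    rw [L.zpow_zero, L.rightMul_one]
    exact Commute.one_right _
  | succ n ih => rwa [← mul_self_zpow, h.commute_rightMul_mul_iff]
  | pred n ih => rwa [← h.commute_rightMul_mul_iff, mul_self_zpow, sub_add_cancel]

theorem IsLeftSUF.zpow_mul_zpow (h : L.IsLeftSUF) (x : Q) (m n : ℤ) :
    L.mul (L.zpow x m) (L.zpow x n) = L.zpow x (m + n) :=
  calc
    L.mul (L.zpow x m) (L.zpow x n)
      = (L.rightMul (L.zpow x n) * L.leftMul x ^ m) L.one := rfl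
    _ = (L.leftMul x ^ m * L.rightMul (L.zpow x n)) L.one := by
      rw [(h.commute_leftMul_rightMul_zpow x n).zpow_left m]
    _ = (L.leftMul x ^ m) (L.zpow x n) := by
      rw [Equiv.Perm.mul_apply, rightMul_apply, L.one_mul]
    _ = L.zpow x (m + n) := L.leftMul_zpow_apply_zpow x m n

theorem commute_leftMul_zpow_rightMul_zpow (hl : L.IsLeftSUF) (hr : L.IsRightSUF) (x : Q)
    (m n : ℤ) : Commute (L.leftMul (L.zpow x m)) (L.rightMul (L.zpow x n)) := by
  induction m, n using forall_int_of_add_iff with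
  | zero_left n =>
    rw [L.zpow_zero, L.leftMul_one]
    exact Commute.one_left _
  | add_left m n => rw [← hl.zpow_mul_zpow, hr.commute_leftMul_mul_iff]
  | add_right m n => rw [add_comm, ← hl.zpow_mul_zpow, hl.commute_rightMul_mul_iff]

end LoopStr

/-- In an SUF loop, `xᵐ·(y·xⁿ) = (xᵐ·y)·xⁿ` for all integers `m, n`,
where integer powers are defined left-associatedly. -/
theorem suf_pow_comm {Q : Type*} (L : LoopStr Q)
    (lsuf : ∀ x y u,
      L.mul (L.rd x u) (L.mul (L.rd y u) x)
        = L.mul (L.rd (L.mul (L.rd x u) y) u) x)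
    (rsuf : ∀ x y v,
      L.mul x (L.ld v (L.mul y (L.ld v x)))
        = L.mul (L.mul x (L.ld v y)) (L.ld v x))
    (pow : Q → ℤ → Q)
    (pow_zero : ∀ x, pow x 0 = L.one)
    (pow_succ : ∀ x (n : ℤ), pow x (n + 1) = L.mul x (pow x n))
    (pow_pred : ∀ x (n : ℤ), pow x (n - 1) = L.ld x (pow x n)) :
    ∀ x y : Q, ∀ m n : ℤ,
      L.mul (pow x m) (L.mul y (pow x n))
        = L.mul (L.mul (pow x m) y) (pow x n) := by
  intro x y m n
  rw [L.eq_zpow (pow_zero x) (pow_succ x) m, L.eq_zpow (pow_zero x) (pow_succ x) n]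
  have leftSUF : L.IsLeftSUF := fun u x y => lsuf x y u
  have rightSUF : L.IsRightSUF := fun v x y => rsuf x y v
  exact DFunLike.congr_fun (LoopStr.commute_leftMul_zpow_rightMul_zpow leftSUF rightSUF x m n).eq y
end

section
/- A loop Q with a two-sided inverse map x ↦ x⁻¹ (i.e., 1/x = x\1 = x⁻¹ for all x) satisfies the identity (x·u)·(v·((y·u)·(v·x))) = (((x·u)·(v·y))·u)·(v·x) for all x, y, u, v if and only if Q is a universally flexible loop with the inverse property (x⁻¹·(x·y)=y and (y·x)·x⁻¹=y for all x,y). -/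
/-!
The two identities say that the products `(x/u)·(v\y)`, respectively `(x·u)·(v·y)`, are flexible
for all `u` and `v`. In an inverse property loop `x/u = x·u⁻¹` and `v\y = v⁻¹·y`, so the
involution `x ↦ x⁻¹` of the parameters carries one family of products to the other. It remains to
see that flexibility of the second family forces the inverse property: set one parameter to `1`,
choose `y` so that it cancels the other, and cancel the outer factors.
-/

namespace LoopStr

variable {Q : Type*} (L : LoopStr Q) (inv : Q → Q)

/-- Universal flexibility: the principal isotopes `x ∘ y = (x/u)·(v\y)` are all flexible, with
`x ∘ (y ∘ x) = (x ∘ y) ∘ x` written out in the operations of `L`. -/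
def IsUniversallyFlexible : Prop :=
  ∀ x y u v,
    L.mul (L.rd x u) (L.ld v (L.mul (L.rd y u) (L.ld v x)))
      = L.mul (L.rd (L.mul (L.rd x u) (L.ld v y)) u) (L.ld v x)

/-- The division-free counterpart of `IsUniversallyFlexible`, flexibility of all the products
`x ∘ y = (x·u)·(v·y)`. It is the single identity that axiomatizes the universally flexible (UF)
loops with the inverse property (IP). -/
def UFIPIdentity : Prop :=
  ∀ x y u v,
    L.mul (L.mul x u) (L.mul v (L.mul (L.mul y u) (L.mul v x)))
      = L.mul (L.mul (L.mul (L.mul x u) (L.mul v y)) u) (L.mul v x)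

/-- The left inverse property `x⁻¹·(x·y) = y`, for a map `inv` in the role of `x ↦ x⁻¹`. -/
def HasLeftInverseProperty : Prop :=
  ∀ x y, L.mul (inv x) (L.mul x y) = y

/-- The right inverse property `(y·x)·x⁻¹ = y`, for a map `inv` in the role of `x ↦ x⁻¹`. -/
def HasRightInverseProperty : Prop :=
  ∀ x y, L.mul (L.mul y x) (inv x) = y

variable {L inv}

theorem mul_left_cancel {a b c : Q} (h : L.mul a b = L.mul a c) : b = c := by
  rw [← L.ld_mul a b, h, L.ld_mul]

theorem mul_right_cancel {a b c : Q} (h : L.mul a b = L.mul c b) : a = c := by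
  rw [← L.rd_mul b a, h, L.rd_mul]

namespace HasLeftInverseProperty

theorem ld_eq_inv_mul (h : L.HasLeftInverseProperty inv) (x y : Q) :
    L.ld x y = L.mul (inv x) y := by
  rw [← h x (L.ld x y), L.mul_ld]

theorem inv_mul_self (h : L.HasLeftInverseProperty inv) (x : Q) : L.mul (inv x) x = L.one := by
  simpa only [L.mul_one] using h x L.one

theorem involutive (h : L.HasLeftInverseProperty inv) : Function.Involutive inv := fun x => by
  simpa only [h.inv_mul_self, L.mul_one] using h (inv x) x

end HasLeftInverseProperty

theorem HasRightInverseProperty.rd_eq_mul_inv (h : L.HasRightInverseProperty inv) (y x : Q) :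
    L.rd y x = L.mul y (inv x) := by
  rw [← h x (L.rd y x), L.mul_rd]

namespace UFIPIdentity

theorem hasLeftInverseProperty (h : L.UFIPIdentity) (hinv : ∀ x, L.mul x (inv x) = L.one) :
    L.HasLeftInverseProperty inv := fun x y => by
  have cancellable : L.mul y (L.mul x (L.mul (inv x) (L.mul x y))) = L.mul y (L.mul x y) := by
    simpa only [L.mul_one, hinv] using h y (inv x) L.one x
  exact mul_left_cancel (mul_left_cancel cancellable)

theorem hasRightInverseProperty (h : L.UFIPIdentity) (hinv : ∀ x, L.mul (inv x) x = L.one) :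
    L.HasRightInverseProperty inv := fun x y => by
  have cancellable : L.mul (L.mul (L.mul (L.mul y x) (inv x)) x) y = L.mul (L.mul y x) y := by
    simpa only [L.one_mul, hinv] using (h y (inv x) x L.one).symm
  exact mul_right_cancel (mul_right_cancel cancellable)

end UFIPIdentity

theorem isUniversallyFlexible_iff_ufipIdentity (hl : L.HasLeftInverseProperty inv)
    (hr : L.HasRightInverseProperty inv) : L.IsUniversallyFlexible ↔ L.UFIPIdentity := by
  refine forall₂_congr fun x y => ?_
  simp only [hl.ld_eq_inv_mul, hr.rd_eq_mul_inv]
  exact ⟨fun h => hl.involutive.surjective.forall₂.2 h, fun h u v => h (inv u) (inv v)⟩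

end LoopStr

theorem uf_ip_equiv_general {Q : Type*} (L : LoopStr Q) {inv : Q → Q}
    (hinv : ∀ x, L.mul x (inv x) = L.one) :
    L.UFIPIdentity ↔
      L.IsUniversallyFlexible ∧ L.HasLeftInverseProperty inv ∧ L.HasRightInverseProperty inv := by
  constructor
  · intro h
    have hl : L.HasLeftInverseProperty inv := h.hasLeftInverseProperty hinv
    have hr : L.HasRightInverseProperty inv := h.hasRightInverseProperty hl.inv_mul_self
    exact ⟨(LoopStr.isUniversallyFlexible_iff_ufipIdentity hl hr).2 h, hl, hr⟩
  · rintro ⟨huf, hl, hr⟩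
    exact (LoopStr.isUniversallyFlexible_iff_ufipIdentity hl hr).1 huf

/-- A loop with a two-sided inverse satisfies
`(x·u)·(v·((y·u)·(v·x))) = (((x·u)·(v·y))·u)·(v·x)` iff it is a universally
flexible loop with the inverse property. -/
theorem uf_ip_equiv {Q : Type*} (L : LoopStr Q) (inv : Q → Q)
    (hinv : ∀ x, L.rd L.one x = inv x ∧ L.ld x L.one = inv x) :
    (∀ x y u v,
      L.mul (L.mul x u) (L.mul v (L.mul (L.mul y u) (L.mul v x)))
        = L.mul (L.mul (L.mul (L.mul x u) (L.mul v y)) u) (L.mul v x))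
    ↔ ((∀ x y u v,
          L.mul (L.rd x u) (L.ld v (L.mul (L.rd y u) (L.ld v x)))
            = L.mul (L.rd (L.mul (L.rd x u) (L.ld v y)) u) (L.ld v x))
        ∧ (∀ x y, L.mul (inv x) (L.mul x y) = y)
        ∧ (∀ x y, L.mul (L.mul y x) (inv x) = y)) :=
  uf_ip_equiv_general L fun x => by rw [← (hinv x).2, L.mul_ld]
end
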